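/- Assume f satisfies (f1) and (f2) with constant B ∈ [1,∞), and let ψ, φ, ε₁, ε₂ be the Emden–Fowler model data. Define I(ρ) := f(φ(ρ))·F(φ(ρ)) · ( ψ'(ρ)² / ( g(ψ(ρ))²·G(ψ(ρ))² ) ) · ( f'(φ(ρ))·F(φ(ρ)) − g'(ψ(ρ))·G(ψ(ρ)) ). Then there exist C > 0 and ρ₀ > 1 such that for all ρ ≥ ρ₀: |I(ρ)| ≤ C · f(φ(ρ))·F(φ(ρ)) · ε₁(ρ) / ρ and |I'(ρ)| ≤ C · f(φ(ρ))·F(φ(ρ)) · ( ε₁(ρ) + ε₂(ρ) ) / ρ². -/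

import Mathlib

open MeasureTheory Filter

/-- `Fint f s = ∫_s^∞ dτ / f(τ)`. -/
noncomputable def Fint (f : ℝ → ℝ) (s : ℝ) : ℝ := ∫ τ in Set.Ioi s, 1 / f τ

/-- `1/B₁[f](s) = (−log F(s))·(1 − f'(s)·F(s))`, with `G` playing the role of `F`. -/
noncomputable def invB1 (f G : ℝ → ℝ) (s : ℝ) : ℝ :=
  (-Real.log (G s)) * (1 - deriv f s * G s)

/-- `1/B₂[f](s) = f'(s)·F(s)·(log F(s))²·(f(s)·f''(s)·F(s)/f'(s) − 1)`,
with `G` playing the role of `F`. -/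
noncomputable def invB2 (f G : ℝ → ℝ) (s : ℝ) : ℝ :=
  deriv f s * G s * (Real.log (G s)) ^ 2 *
    (f s * deriv (deriv f) s * G s / deriv f s - 1)

/-- The model singular solution `v`. -/
noncomputable def modelv (B t : ℝ) : ℝ :=
  if B = 1 then Real.log (-2 * Real.log t) else (-2 * Real.log t) ^ ((B - 1) / B)

/-- The model nonlinearity `g`. -/
noncomputable def modelg (B s : ℝ) : ℝ :=
  if B = 1 then 4 * Real.exp (Real.exp s - 2 * s)
  else (4 / (B * (B / (B - 1)))) * s ^ (1 - 2 * (B / (B - 1))) * Real.exp (s ^ (B / (B - 1)))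

/-- The model function `G(s) = ∫_s^∞ dτ/g(τ)` in closed form. -/
noncomputable def modelG (B s : ℝ) : ℝ :=
  if B = 1 then (1 / 4) * (Real.exp s + 1) * Real.exp (-Real.exp s)
  else (B / 4) * (s ^ (B / (B - 1)) + 1) * Real.exp (-(s ^ (B / (B - 1))))

/-- The Emden–Fowler model profile `ψ`. -/
noncomputable def modelpsi (B ρ : ℝ) : ℝ :=
  if B = 1 then Real.log (ρ - 1) else (ρ - 1) ^ ((B - 1) / B)

/-- `ε₁(ρ) = |1/B₁[f](φ(ρ)) − 1/B₁[g](ψ(ρ))|`. -/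
noncomputable def eps1 (f φ : ℝ → ℝ) (B ρ : ℝ) : ℝ :=
  |invB1 f (Fint f) (φ ρ) - invB1 (modelg B) (modelG B) (modelpsi B ρ)|

/-- `ε₂(ρ) = |1/B₂[f](φ(ρ)) − 1/B₂[g](ψ(ρ))|`. -/
noncomputable def eps2 (f φ : ℝ → ℝ) (B ρ : ℝ) : ℝ :=
  |invB2 f (Fint f) (φ ρ) - invB2 (modelg B) (modelG B) (modelpsi B ρ)|

/-- The inhomogeneous term
`I(ρ) = f(φ)F(φ) · ψ'² / (g(ψ)²G(ψ)²) · (f'(φ)F(φ) − g'(ψ)G(ψ))`. -/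
noncomputable def Ifun (f φ : ℝ → ℝ) (B ρ : ℝ) : ℝ :=
  f (φ ρ) * Fint f (φ ρ) *
    ((deriv (modelpsi B) ρ) ^ 2 / ((modelg B (modelpsi B ρ)) ^ 2 * (modelG B (modelpsi B ρ)) ^ 2)) *
    (deriv f (φ ρ) * Fint f (φ ρ) - deriv (modelg B) (modelpsi B ρ) * modelG B (modelpsi B ρ))

/-- The common value `F(φ(ρ)) = G(ψ(ρ))`. -/
noncomputable def Hfun (B ρ : ℝ) : ℝ := (B / 4) * ρ * Real.exp (-ρ + 1)

lemma Hfun_hasDerivAt (B ρ : ℝ) (hρ : ρ ≠ 0) :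
    HasDerivAt (Hfun B) (-(1 - 1 / ρ) * Hfun B ρ) ρ := by
  have h1 : HasDerivAt (fun r : ℝ => -r + 1) (-1) ρ := by
    simpa using ((hasDerivAt_id ρ).neg.add_const 1)
  have h2 := ((hasDerivAt_id ρ).const_mul (B / 4)).mul h1.exp
  refine h2.congr_deriv ?_
  simp only [Hfun, id]
  field_simp
  ring

lemma Hfun_pos (B ρ : ℝ) (hB : 0 < B) (hρ : 0 < ρ) : 0 < Hfun B ρ := by
  unfold Hfun; positivity

lemma gen (h K χ : ℝ → ℝ) (B ρ c : ℝ) (hB : 0 < B) (hρ : 1 < ρ)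
    (hh : ContDiffAt ℝ 2 h (χ ρ)) (hpos : 0 < h (χ ρ))
    (hK : HasDerivAt K (-1 / h (χ ρ)) (χ ρ))
    (hKχ : ∀ᶠ r in nhds ρ, K (χ r) = Hfun B r)
    (hχ : HasDerivAt χ c ρ) (hne : deriv h (χ ρ) ≠ 0) (hL : Real.log (Hfun B ρ) ≠ 0) :
    c = (1 - 1 / ρ) * (h (χ ρ) * K (χ ρ)) ∧
    HasDerivAt (fun r => h (χ r) * K (χ r))
      (h (χ ρ) * K (χ ρ) * ((1 - 1 / ρ) * (deriv h (χ ρ) * K (χ ρ) - 1))) ρ ∧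
    HasDerivAt (fun r => deriv h (χ r) * K (χ r))
      ((1 - 1 / ρ) * invB2 h K (χ ρ) / (Real.log (Hfun B ρ)) ^ 2) ρ := by
  have hKρ : K (χ ρ) = Hfun B ρ := hKχ.self_of_nhds
  have h1 : HasDerivAt (fun r => K (χ r)) (-(1 - 1 / ρ) * Hfun B ρ) ρ :=
    (Hfun_hasDerivAt B ρ (by linarith)).congr_of_eventuallyEq hKχ
  have h2 : HasDerivAt (fun r => K (χ r)) (-1 / h (χ ρ) * c) ρ := hK.comp ρ hχ
  have hc : c = (1 - 1 / ρ) * (h (χ ρ) * K (χ ρ)) := by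
    have := h1.unique h2
    rw [hKρ]
    have h3 : c = -(h (χ ρ)) * (-1 / h (χ ρ) * c) := by field_simp
    rw [h3, ← this]; ring
  have hd : HasDerivAt h (deriv h (χ ρ)) (χ ρ) :=
    (hh.differentiableAt (by norm_num)).hasDerivAt
  have hd2 : HasDerivAt (deriv h) (deriv (deriv h) (χ ρ)) (χ ρ) := by
    have : ContDiffAt ℝ 1 (deriv h) (χ ρ) := by
      have := ContDiffAt.derivWithin (m := 1) hh (by norm_num)
      exact this
    exact (this.differentiableAt (by norm_num)).hasDerivAt
  have e1 : HasDerivAt (fun r => h (χ r)) (deriv h (χ ρ) * c) ρ := hd.comp ρ hχ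
  have e2 : HasDerivAt (fun r => deriv h (χ r)) (deriv (deriv h) (χ ρ) * c) ρ := hd2.comp ρ hχ
  refine ⟨hc, (e1.mul h1).congr_deriv ?_, (e2.mul h1).congr_deriv ?_⟩
  · rw [hc, ← hKρ]; ring
  · rw [hc]; unfold invB2; rw [hKρ]; field_simp; ring

section F
variable {f : ℝ → ℝ} {s₀ : ℝ}

lemma Fint_strict (hf : ContDiffOn ℝ 2 f (Set.Ioi s₀))
    (hfpos : ∀ s, s₀ < s → 0 < f s)
    (hfint : ∀ s, s₀ < s → IntegrableOn (fun τ => 1 / f τ) (Set.Ioi s))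
    (s : ℝ) (hs : s₀ < s) : HasStrictDerivAt (Fint f) (-1 / f s) s := by
  obtain ⟨m, hm1, hm2⟩ := exists_between hs
  have hcont : ContinuousOn (fun τ => 1 / f τ) (Set.Ioi s₀) :=
    continuousOn_const.div hf.continuousOn (fun x hx => (hfpos x hx).ne')
  have hint : ∀ x, m ≤ x → IntervalIntegrable (fun τ => 1 / f τ) volume m x := fun x hx =>
    (intervalIntegrable_iff_integrableOn_Ioc_of_le hx).2
      ((hfint m hm1).mono_set Set.Ioc_subset_Ioi_self)
  have h1 : HasStrictDerivAt (fun x => ∫ τ in m..x, 1 / f τ) (1 / f s) s := by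
    apply intervalIntegral.integral_hasStrictDerivAt_right (hint s hm2.le)
    · exact hcont.stronglyMeasurableAtFilter isOpen_Ioi s hs
    · exact hcont.continuousAt (Ioi_mem_nhds hs)
  have h2 : HasStrictDerivAt (fun x => Fint f m - ∫ τ in m..x, 1 / f τ) (-(1 / f s)) s := by
    simpa using h1.const_sub (Fint f m)
  rw [neg_div]
  refine h2.congr_of_eventuallyEq ?_
  filter_upwards [Ioi_mem_nhds hm2] with x hx
  have := intervalIntegral.integral_interval_add_Ioi (hfint m hm1) (hfint x (hm1.trans hx))
  simp only [Fint]; linarith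

lemma Fint_anti (hf : ContDiffOn ℝ 2 f (Set.Ioi s₀))
    (hfpos : ∀ s, s₀ < s → 0 < f s)
    (hfint : ∀ s, s₀ < s → IntegrableOn (fun τ => 1 / f τ) (Set.Ioi s)) :
    StrictAntiOn (Fint f) (Set.Ioi s₀) := by
  have hd := Fint_strict hf hfpos hfint
  apply strictAntiOn_of_deriv_neg (convex_Ioi s₀)
  · exact fun x hx => (hd x hx).hasDerivAt.continuousAt.continuousWithinAt
  · intro x hx
    rw [interior_Ioi] at hx
    rw [(hd x hx).hasDerivAt.deriv]
    exact div_neg_of_neg_of_pos (by norm_num) (hfpos x hx)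

lemma Fint_pos (hf : ContDiffOn ℝ 2 f (Set.Ioi s₀))
    (hfpos : ∀ s, s₀ < s → 0 < f s)
    (hfint : ∀ s, s₀ < s → IntegrableOn (fun τ => 1 / f τ) (Set.Ioi s))
    (s : ℝ) (hs : s₀ < s) : 0 < Fint f s := by
  have h1 := Fint_anti hf hfpos hfint (show s ∈ Set.Ioi s₀ from hs)
    (show s + 1 ∈ Set.Ioi s₀ from by simp; linarith) (by linarith)
  have h2 : 0 ≤ Fint f (s + 1) := by
    apply setIntegral_nonneg measurableSet_Ioi
    intro x hx
    have : s₀ < x := by simp at hx; linarith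
    exact (one_div_pos.2 (hfpos x this)).le
  linarith

lemma phi_cont {φ : ℝ → ℝ} {B : ℝ} (hf : ContDiffOn ℝ 2 f (Set.Ioi s₀))
    (hfpos : ∀ s, s₀ < s → 0 < f s)
    (hfint : ∀ s, s₀ < s → IntegrableOn (fun τ => 1 / f τ) (Set.Ioi s))
    (hφ : ∀ ρ > (1 : ℝ), s₀ < φ ρ ∧ Fint f (φ ρ) = Hfun B ρ) (ρ : ℝ) (hρ : 1 < ρ) :
    ContinuousAt φ ρ := by
  have hA := Fint_anti hf hfpos hfint
  have hH : ContinuousAt (Hfun B) ρ := (Hfun_hasDerivAt B ρ (by linarith)).continuousAt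
  obtain ⟨h0, h1⟩ := hφ ρ hρ
  refine tendsto_order.2 ⟨fun x hx => ?_, fun x hx => ?_⟩
  · obtain ⟨y, hy1, hy2⟩ := exists_between (max_lt h0 hx)
    have hy0 : s₀ < y := (le_max_left _ _).trans_lt hy1
    have : Hfun B ρ < Fint f y := by rw [← h1]; exact hA hy0 h0 hy2
    filter_upwards [hH.eventually_lt_const this, Ioi_mem_nhds hρ] with r hr hr1
    rw [← (hφ r hr1).2] at hr
    exact ((le_max_right _ _).trans_lt hy1).trans ((hA.lt_iff_gt (hφ r hr1).1 hy0).1 hr)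
  · have hx0 : s₀ < x := h0.trans hx
    have : Fint f x < Hfun B ρ := by rw [← h1]; exact hA h0 hx0 hx
    filter_upwards [hH.eventually_const_lt this, Ioi_mem_nhds hρ] with r hr hr1
    rw [← (hφ r hr1).2] at hr
    exact (hA.lt_iff_gt hx0 (hφ r hr1).1).1 hr

lemma phi_diff {φ : ℝ → ℝ} {B : ℝ} (hf : ContDiffOn ℝ 2 f (Set.Ioi s₀))
    (hfpos : ∀ s, s₀ < s → 0 < f s)
    (hfint : ∀ s, s₀ < s → IntegrableOn (fun τ => 1 / f τ) (Set.Ioi s))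
    (hφ : ∀ ρ > (1 : ℝ), s₀ < φ ρ ∧ Fint f (φ ρ) = Hfun B ρ) (ρ : ℝ) (hρ : 1 < ρ) :
    DifferentiableAt ℝ φ ρ := by
  obtain ⟨h0, h1⟩ := hφ ρ hρ
  have hc := phi_cont hf hfpos hfint hφ ρ hρ
  have hd := Fint_strict hf hfpos hfint _ h0
  have hne : -1 / f (φ ρ) ≠ 0 := div_ne_zero (by norm_num) (hfpos _ h0).ne'
  have hloc := (hd.to_localInverse hne).hasDerivAt
  rw [h1] at hloc
  have := hloc.comp ρ (Hfun_hasDerivAt B ρ (by linarith))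
  refine (this.congr_of_eventuallyEq ?_).differentiableAt
  have hev := hc.eventually
    (HasStrictFDerivAt.eventually_left_inverse (hd.hasStrictFDerivAt_equiv hne))
  filter_upwards [hev, Ioi_mem_nhds hρ] with r hr hr1
  rw [(hφ r hr1).2] at hr
  exact hr.symm

lemma phi_tendsto {φ : ℝ → ℝ} {B : ℝ} (hf : ContDiffOn ℝ 2 f (Set.Ioi s₀))
    (hfpos : ∀ s, s₀ < s → 0 < f s)
    (hfint : ∀ s, s₀ < s → IntegrableOn (fun τ => 1 / f τ) (Set.Ioi s))
    (hφ : ∀ ρ > (1 : ℝ), s₀ < φ ρ ∧ Fint f (φ ρ) = Hfun B ρ) :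
    Tendsto φ atTop atTop := by
  have hA := Fint_anti hf hfpos hfint
  have hH : Tendsto (Hfun B) atTop (nhds 0) := by
    have h := (Real.tendsto_pow_mul_exp_neg_atTop_nhds_zero 1).const_mul (B / 4 * Real.exp 1)
    rw [mul_zero] at h
    refine h.congr (fun x => ?_)
    simp only [Hfun, Real.exp_add]; ring
  refine tendsto_atTop.2 (fun M => ?_)
  have hM : s₀ < max M (s₀ + 1) := (by linarith : s₀ < s₀ + 1).trans_le (le_max_right _ _)
  filter_upwards [hH.eventually_lt_const (Fint_pos hf hfpos hfint _ hM),
    eventually_gt_atTop 1] with r hr hr1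
  rw [← (hφ r hr1).2] at hr
  exact (le_max_left _ _).trans ((hA.lt_iff_gt (hφ r hr1).1 hM).1 hr).le

end F

lemma log_Hfun_eventually (B : ℝ) (hB : 0 < B) :
    ∀ᶠ ρ in atTop, ρ / 2 ≤ -Real.log (Hfun B ρ) := by
  have h1 := Real.isLittleO_log_id_atTop.bound (show (0 : ℝ) < 1 / 4 by norm_num)
  filter_upwards [h1, eventually_ge_atTop (1 : ℝ),
    eventually_ge_atTop (4 * (1 + Real.log (B / 4)))] with ρ h h1 h2
  have : Real.log (Hfun B ρ) = Real.log (B / 4) + Real.log ρ + (-ρ + 1) := by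
    unfold Hfun
    rw [Real.log_mul (by positivity) (by positivity), Real.log_mul (by positivity) (by positivity),
      Real.log_exp]
  rw [this]
  simp only [id, Real.norm_eq_abs] at h
  rw [abs_of_pos (by linarith : 0 < ρ)] at h
  have := (le_abs_self _).trans h
  linarith

lemma model_facts (B : ℝ) (hB : 1 ≤ B) (ρ : ℝ) (hρ : 3 < ρ) :
    ContDiffAt ℝ 2 (modelg B) (modelpsi B ρ) ∧ 0 < modelg B (modelpsi B ρ) ∧
    HasDerivAt (modelG B) (-1 / modelg B (modelpsi B ρ)) (modelpsi B ρ) ∧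
    (∀ᶠ r in nhds ρ, modelG B (modelpsi B r) = Hfun B r) ∧
    DifferentiableAt ℝ (modelpsi B) ρ ∧ deriv (modelg B) (modelpsi B ρ) ≠ 0 := by
  have ht : 0 < ρ - 1 := by linarith
  rcases hB.eq_or_lt with h1 | h1
  · subst h1
    have eg : modelg 1 = fun s => 4 * Real.exp (Real.exp s - 2 * s) := by
      funext s; simp [modelg]
    have eG : modelG 1 = fun s => (1 / 4) * (Real.exp s + 1) * Real.exp (-Real.exp s) := by
      funext s; simp [modelG]
    have ep : modelpsi 1 = fun s => Real.log (s - 1) := by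
      funext s; simp [modelpsi]
    have hes : Real.exp (modelpsi 1 ρ) = ρ - 1 := by rw [ep]; exact Real.exp_log ht
    refine ⟨?_, ?_, ?_, ?_, ?_, ?_⟩
    · rw [eg]; fun_prop
    · rw [eg]; positivity
    · rw [eG, eg]
      generalize modelpsi 1 ρ = s
      have h := (((Real.hasDerivAt_exp s).add_const 1).const_mul (1 / 4)).mul
        (Real.hasDerivAt_exp s).neg.exp
      refine h.congr_deriv ?_
      simp only [Pi.neg_apply, Real.exp_neg, Real.exp_sub, two_mul, Real.exp_add]
      field_simp
      ring
    · filter_upwards [Ioi_mem_nhds hρ] with r hr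
      have : 0 < r - 1 := by simp at hr; linarith
      rw [eG, ep]
      simp only [Real.exp_log this, Hfun]
      rw [show -(r - 1) = -r + 1 by ring]; ring
    · rw [ep]
      have : ρ - 1 ≠ 0 := ht.ne'
      fun_prop (disch := assumption)
    · have h : HasDerivAt (modelg 1) (4 * (Real.exp (Real.exp (modelpsi 1 ρ) - 2 * modelpsi 1 ρ)
          * (Real.exp (modelpsi 1 ρ) - 2 * 1))) (modelpsi 1 ρ) := by
        rw [eg]
        exact (((Real.hasDerivAt_exp _).sub ((hasDerivAt_id _).const_mul 2)).exp).const_mul 4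
      rw [h.deriv, hes]
      have : 0 < ρ - 1 - 2 * 1 := by linarith
      positivity
  · have hB1 : B ≠ 1 := h1.ne'
    set b := B / (B - 1) with hb
    have hbpos : 0 < b := div_pos (by linarith) (by linarith)
    have hbinv : (B - 1) / B = b⁻¹ := by rw [hb, inv_div]
    have eg : modelg B = fun s => (4 / (B * b)) * s ^ (1 - 2 * b) * Real.exp (s ^ b) := by
      funext s; simp [modelg, hB1, hb]
    have eG : modelG B = fun s => (B / 4) * (s ^ b + 1) * Real.exp (-(s ^ b)) := by
      funext s; simp [modelG, hB1, hb]
    have ep : modelpsi B = fun s => (s - 1) ^ (b⁻¹) := by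
      funext s; simp [modelpsi, hB1, hbinv]
    have hs : 0 < modelpsi B ρ := by rw [ep]; positivity
    have hes : modelpsi B ρ ^ b = ρ - 1 := by rw [ep]; exact Real.rpow_inv_rpow ht.le hbpos.ne'
    refine ⟨?_, ?_, ?_, ?_, ?_, ?_⟩
    · rw [eg]
      have := hs.ne'
      fun_prop (disch := assumption)
    · rw [eg]; positivity
    · rw [eG, eg]
      generalize modelpsi B ρ = s at hs
      have hd := Real.hasDerivAt_rpow_const (x := s) (p := b) (Or.inl hs.ne')
      have h := ((hd.add_const 1).const_mul (B / 4)).mul hd.neg.exp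
      refine h.congr_deriv ?_
      have e1 : s ^ (1 - 2 * b) = s / (s ^ b * s ^ b) := by
        rw [Real.rpow_sub hs, Real.rpow_one, two_mul, Real.rpow_add hs]
      have e2 : s ^ (b - 1) = s ^ b / s := by rw [Real.rpow_sub hs, Real.rpow_one]
      have : 0 < s ^ b := by positivity
      simp only [Pi.neg_apply, Real.exp_neg, e1, e2]
      field_simp
      ring
    · filter_upwards [Ioi_mem_nhds hρ] with r hr
      have : 0 < r - 1 := by simp at hr; linarith
      rw [eG, ep]
      simp only [Real.rpow_inv_rpow this.le hbpos.ne', Hfun]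
      rw [show -(r - 1) = -r + 1 by ring]; ring
    · rw [ep]
      have : ρ - 1 ≠ 0 := ht.ne'
      fun_prop (disch := assumption)
    · generalize modelpsi B ρ = s at hs hes
      have hd := Real.hasDerivAt_rpow_const (x := s) (p := b) (Or.inl hs.ne')
      have hd2 := Real.hasDerivAt_rpow_const (x := s) (p := 1 - 2 * b) (Or.inl hs.ne')
      have h : HasDerivAt (modelg B)
          (4 / (B * b) * ((1 - 2 * b) * s ^ (1 - 2 * b - 1)) * Real.exp (s ^ b) +
          4 / (B * b) * s ^ (1 - 2 * b) * (Real.exp (s ^ b) * (b * s ^ (b - 1)))) s := by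
        rw [eg]
        exact (hd2.const_mul (4 / (B * b))).mul hd.exp
      rw [h.deriv]
      have e1 : s ^ (1 - 2 * b) = s / (s ^ b * s ^ b) := by
        rw [Real.rpow_sub hs, Real.rpow_one, two_mul, Real.rpow_add hs]
      have e2 : s ^ (b - 1) = s ^ b / s := by rw [Real.rpow_sub hs, Real.rpow_one]
      have e3 : s ^ (1 - 2 * b - 1) = s ^ (1 - 2 * b) / s := by rw [Real.rpow_sub hs, Real.rpow_one]
      have hp : 0 < 1 - 2 * b + b * s ^ b := by rw [hes]; nlinarith
      have : 0 < s ^ (1 - 2 * b) := by positivity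
      have hB0 : 0 < B := by linarith
      have key : 4 / (B * b) * ((1 - 2 * b) * s ^ (1 - 2 * b - 1)) * Real.exp (s ^ b) +
          4 / (B * b) * s ^ (1 - 2 * b) * (Real.exp (s ^ b) * (b * s ^ (b - 1))) =
          4 / (B * b) * (s ^ (1 - 2 * b) / s) * Real.exp (s ^ b) * (1 - 2 * b + b * s ^ b) := by
        rw [e3, e2]; ring
      rw [key]
      positivity

lemma decay (u u' : ℝ → ℝ) (K ρ₁ : ℝ) (hρ₁ : 0 < ρ₁) (hu : ∀ r ≥ ρ₁, HasDerivAt u (u' r) r)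
    (hb : ∀ r ≥ ρ₁, |u' r| ≤ K / r ^ 2) (hlim : Tendsto u atTop (nhds 1)) (ρ : ℝ) (hρ : ρ₁ ≤ ρ) :
    |u ρ - 1| ≤ K / ρ := by
  have hinv : ∀ r ≥ ρ₁, HasDerivAt (fun r : ℝ => K / r) (-(K / r ^ 2)) r := fun r hr => by
    have : r ≠ 0 := by linarith
    have h := (hasDerivAt_inv this).const_mul K
    refine h.congr_deriv ?_
    field_simp
  have hl : Tendsto (fun r : ℝ => K / r) atTop (nhds 0) := tendsto_const_nhds.div_atTop tendsto_id
  have m1 : MonotoneOn (fun r => u r - K / r) (Set.Ici ρ₁) := by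
    apply monotoneOn_of_deriv_nonneg (convex_Ici ρ₁)
    · exact fun r hr => ((hu r hr).sub (hinv r hr)).continuousAt.continuousWithinAt
    · exact fun r hr => ((hu r (interior_subset hr)).sub
        (hinv r (interior_subset hr))).differentiableAt.differentiableWithinAt
    · intro r hr
      have hr := interior_subset hr
      have : deriv (fun r => u r - K / r) r = _ := ((hu r hr).sub (hinv r hr)).deriv
      rw [this]
      have := (abs_le.1 (hb r hr)).1
      linarith
  have m2 : AntitoneOn (fun r => u r + K / r) (Set.Ici ρ₁) := by
    apply antitoneOn_of_deriv_nonpos (convex_Ici ρ₁)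
    · exact fun r hr => ((hu r hr).add (hinv r hr)).continuousAt.continuousWithinAt
    · exact fun r hr => ((hu r (interior_subset hr)).add
        (hinv r (interior_subset hr))).differentiableAt.differentiableWithinAt
    · intro r hr
      have hr := interior_subset hr
      have : deriv (fun r => u r + K / r) r = _ := ((hu r hr).add (hinv r hr)).deriv
      rw [this]
      have := (abs_le.1 (hb r hr)).2
      linarith
  have l1 : u ρ - K / ρ ≤ 1 - 0 := ge_of_tendsto (hlim.sub hl) (by
    filter_upwards [eventually_ge_atTop ρ] with r hr
    exact m1 hρ (show ρ₁ ≤ r from hρ.trans hr) hr)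
  have l2 : 1 + 0 ≤ u ρ + K / ρ := le_of_tendsto (hlim.add hl) (by
    filter_upwards [eventually_ge_atTop ρ] with r hr
    exact m2 hρ (show ρ₁ ≤ r from hρ.trans hr) hr)
  rw [abs_le]; constructor <;> linarith

/-- Lemma 2.1: `|I(ρ)| ≤ C f(φ)F(φ) ε₁(ρ)/ρ` and
`|I'(ρ)| ≤ C f(φ)F(φ)(ε₁(ρ)+ε₂(ρ))/ρ²` for large `ρ`. -/
theorem stmt7 (f φ : ℝ → ℝ) (s₀ B : ℝ) (hs₀ : 0 < s₀)
    (hf : ContDiffOn ℝ 2 f (Set.Ioi s₀))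
    (hfpos : ∀ s, s₀ < s → 0 < f s)
    (hf' : ∀ s, s₀ < s → 0 < deriv f s)
    (hfint : ∀ s, s₀ < s → IntegrableOn (fun τ => 1 / f τ) (Set.Ioi s))
    (hB : 1 ≤ B)
    (hf2a : Tendsto (fun s => deriv f s * Fint f s) atTop (nhds 1))
    (hf2b : Tendsto (fun s => invB2 f (Fint f) s) atTop (nhds (1 / B)))
    (hφ : ∀ ρ > (1 : ℝ), s₀ < φ ρ ∧ Fint f (φ ρ) = (B / 4) * ρ * Real.exp (-ρ + 1)) :
    ∃ C > (0 : ℝ), ∃ ρ₀ > (1 : ℝ), ∀ ρ ≥ ρ₀,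
      |Ifun f φ B ρ| ≤ C * f (φ ρ) * Fint f (φ ρ) * eps1 f φ B ρ / ρ
      ∧ |deriv (Ifun f φ B) ρ|
          ≤ C * f (φ ρ) * Fint f (φ ρ) * (eps1 f φ B ρ + eps2 f φ B ρ) / ρ ^ 2 := by
  change ∀ ρ > (1 : ℝ), s₀ < φ ρ ∧ Fint f (φ ρ) = Hfun B ρ at hφ
  have hB0 : 0 < B := by linarith
  have hφt := phi_tendsto hf hfpos hfint hφ
  have hB2 : ∀ᶠ ρ in atTop, |invB2 f (Fint f) (φ ρ)| < 2 := by
    have h1 := (hf2b.comp hφt).abs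
    refine h1.eventually_lt_const ?_
    rw [abs_of_pos (by positivity), div_lt_iff₀ hB0]; linarith
  obtain ⟨ρ₁, hρ₁⟩ := eventually_atTop.1 (hB2.and (log_Hfun_eventually B hB0))
  set ρ₂ := max ρ₁ 3 with hρ₂
  -- all facts for `r > ρ₂`
  have hgt : ∀ r, ρ₂ < r → 3 < r ∧ ρ₁ ≤ r := fun r hr =>
    ⟨(le_max_right _ _).trans_lt hr, (le_max_left _ _).trans hr.le⟩
  have hlogne : ∀ r, ρ₂ < r → Real.log (Hfun B r) ≠ 0 := fun r hr => by
    have h1 := (hρ₁ r (hgt r hr).2).2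
    have h2 := (hgt r hr).1
    intro h; rw [h] at h1; linarith
  have hF : ∀ r, ρ₂ < r → _ := fun r hr =>
    have h3 := (hgt r hr).1
    have h1 : (1 : ℝ) < r := by linarith
    gen f (Fint f) φ B r (deriv φ r) hB0 h1
      (hf.contDiffAt (Ioi_mem_nhds (hφ r h1).1)) (hfpos _ (hφ r h1).1)
      (Fint_strict hf hfpos hfint _ (hφ r h1).1).hasDerivAt
      (by filter_upwards [Ioi_mem_nhds h1] with x hx using (hφ x hx).2)
      (phi_diff hf hfpos hfint hφ r h1).hasDerivAt (hf' _ (hφ r h1).1).ne' (hlogne r hr)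
  have hG : ∀ r, ρ₂ < r → _ := fun r hr =>
    have h3 := (hgt r hr).1
    have hm := model_facts B hB r h3
    gen (modelg B) (modelG B) (modelpsi B) B r (deriv (modelpsi B) r) hB0 (by linarith)
      hm.1 hm.2.1 hm.2.2.1 hm.2.2.2.1 hm.2.2.2.2.1.hasDerivAt hm.2.2.2.2.2 (hlogne r hr)
  have ha : ∀ r, ρ₂ < r → 0 ≤ 1 - 1 / r ∧ 1 - 1 / r ≤ 1 := fun r hr => by
    have h3 := (hgt r hr).1
    have h4 : 0 < 1 / r := one_div_pos.2 (by linarith)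
    have h5 : 1 / r ≤ 1 := by rw [div_le_one (by linarith)]; linarith
    constructor <;> linarith
  have hGpos : ∀ r, ρ₂ < r → modelG B (modelpsi B r) = Hfun B r := fun r hr =>
    (model_facts B hB r (hgt r hr).1).2.2.2.1.self_of_nhds
  have hL2 : ∀ r, ρ₂ < r → ∀ x : ℝ, |x| / (Real.log (Hfun B r)) ^ 2 ≤ |x| * (4 / r ^ 2) := by
    intro r hr x
    have h3 := (hgt r hr).1
    have h1 := (hρ₁ r (hgt r hr).2).2
    have : r ^ 2 / 4 ≤ (Real.log (Hfun B r)) ^ 2 := by nlinarith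
    rw [div_eq_mul_inv]
    refine mul_le_mul_of_nonneg_left ?_ (abs_nonneg x)
    rw [← inv_div]
    exact inv_anti₀ (by positivity) this
  -- decay of the first-order quantity
  have hdec : ∀ r, ρ₂ + 1 ≤ r → |deriv f (φ r) * Fint f (φ r) - 1| ≤ 8 / r := by
    intro r hr
    refine decay (fun r => deriv f (φ r) * Fint f (φ r)) _ 8 (ρ₂ + 1) ?_
      (fun x hx => (hF x (by linarith)).2.2) ?_ (hf2a.comp hφt) r hr
    · have : 3 ≤ ρ₂ := le_max_right _ _
      linarith
    · intro x hx
      have hx' : ρ₂ < x := by linarith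
      have hb := (hρ₁ x (hgt x hx').2).1
      obtain ⟨a0, a1⟩ := ha x hx'
      rw [abs_div, abs_mul, abs_of_nonneg a0, abs_of_nonneg (sq_nonneg (Real.log _)),
        mul_div_assoc]
      have e := hL2 x hx' (invB2 f (Fint f) (φ x))
      have h0 : 0 ≤ |invB2 f (Fint f) (φ x)| / (Real.log (Hfun B x)) ^ 2 := by positivity
      calc _ ≤ 1 * (|invB2 f (Fint f) (φ x)| / (Real.log (Hfun B x)) ^ 2) :=
            mul_le_mul_of_nonneg_right a1 h0
        _ ≤ |invB2 f (Fint f) (φ x)| * (4 / x ^ 2) := by rw [one_mul]; exact e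
        _ ≤ 2 * (4 / x ^ 2) := mul_le_mul_of_nonneg_right hb.le (by positivity)
        _ = 8 / x ^ 2 := by ring
  -- simplified form of `I`
  have hI : ∀ r, ρ₂ < r → Ifun f φ B r = f (φ r) * Fint f (φ r) * (1 - 1 / r) ^ 2 *
      (deriv f (φ r) * Fint f (φ r) -
        deriv (modelg B) (modelpsi B r) * modelG B (modelpsi B r)) := by
    intro r hr
    have hm := model_facts B hB r (hgt r hr).1
    have h3 := (hgt r hr).1
    have hg := hm.2.1.ne'
    have hGne : modelG B (modelpsi B r) ≠ 0 := by
      rw [hGpos r hr]; exact (Hfun_pos B r hB0 (by linarith)).ne'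
    unfold Ifun
    rw [(hG r hr).1]
    congr 2
    generalize (1 - 1 / r) = a
    field_simp
  -- bound on the difference
  have hD : ∀ r, ρ₂ < r → |deriv f (φ r) * Fint f (φ r) -
        deriv (modelg B) (modelpsi B r) * modelG B (modelpsi B r)| ≤ 2 * eps1 f φ B r / r := by
    intro r hr
    have h3 := (hgt r hr).1
    have h1 := (hρ₁ r (hgt r hr).2).2
    have e : eps1 f φ B r = (-Real.log (Hfun B r)) * |deriv f (φ r) * Fint f (φ r) -
        deriv (modelg B) (modelpsi B r) * modelG B (modelpsi B r)| := by
      unfold eps1 invB1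
      rw [hGpos r hr, (hφ r (by linarith)).2, ← abs_of_nonneg (by linarith : 0 ≤ -Real.log (Hfun B r)),
        ← abs_mul, abs_sub_comm]
      rw [abs_of_nonneg (by linarith : 0 ≤ -Real.log (Hfun B r))]
      congr 1; ring
    rw [e, le_div_iff₀ (by linarith)]
    have := mul_le_mul_of_nonneg_right h1 (abs_nonneg (deriv f (φ r) * Fint f (φ r) -
        deriv (modelg B) (modelpsi B r) * modelG B (modelpsi B r)))
    linarith
  refine ⟨20, by norm_num, ρ₂ + 1, by have : 3 ≤ ρ₂ := le_max_right _ _; linarith, fun ρ hρ => ?_⟩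
  have hρ' : ρ₂ < ρ := by linarith
  have h3 := (hgt ρ hρ').1
  obtain ⟨a0, a1⟩ := ha ρ hρ'
  have hρφ := (hφ ρ (by linarith)).1
  have hfF : 0 < f (φ ρ) * Fint f (φ ρ) := mul_pos (hfpos _ hρφ) (Fint_pos hf hfpos hfint _ hρφ)
  have he1 : 0 ≤ eps1 f φ B ρ := abs_nonneg _
  have he2 : 0 ≤ eps2 f φ B ρ := abs_nonneg _
  have hDρ := hD ρ hρ'
  have hdecρ := hdec ρ hρ
  constructor
  · rw [hI ρ hρ', abs_mul, abs_mul, abs_of_pos hfF, abs_of_nonneg (sq_nonneg (1 - 1 / ρ))]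
    have a2 : (1 - 1 / ρ) ^ 2 ≤ 1 := pow_le_one₀ a0 a1
    calc _ ≤ f (φ ρ) * Fint f (φ ρ) * 1 * (2 * eps1 f φ B ρ / ρ) := by gcongr
      _ = 2 * (f (φ ρ) * Fint f (φ ρ) * eps1 f φ B ρ / ρ) := by ring
      _ ≤ 20 * (f (φ ρ) * Fint f (φ ρ) * eps1 f φ B ρ / ρ) := by
          gcongr; norm_num
      _ = _ := by ring
  · have hda : HasDerivAt (fun r : ℝ => (1 - 1 / r) ^ 2) (2 * (1 - 1 / ρ) * (1 / ρ ^ 2)) ρ := by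
      have hρ0 : ρ ≠ 0 := by linarith
      have h := (((hasDerivAt_inv hρ0).const_sub 1).pow 2)
      simp only [one_div]
      refine h.congr_deriv ?_
      norm_num
    have hder := (((hF ρ hρ').2.1.mul hda).mul ((hF ρ hρ').2.2.sub (hG ρ hρ').2.2))
    have hder' := hder.congr_of_eventuallyEq (f₁ := Ifun f φ B) (by
      filter_upwards [Ioi_mem_nhds hρ'] with r hr using hI r hr)
    rw [hder'.deriv]
    have hE : |(1 - 1 / ρ) * invB2 f (Fint f) (φ ρ) / (Real.log (Hfun B ρ)) ^ 2 -
        (1 - 1 / ρ) * invB2 (modelg B) (modelG B) (modelpsi B ρ) / (Real.log (Hfun B ρ)) ^ 2|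
        ≤ 4 * eps2 f φ B ρ / ρ ^ 2 := by
      rw [← sub_div, ← mul_sub, abs_div, abs_mul, abs_of_nonneg a0,
        abs_of_nonneg (sq_nonneg (Real.log _)), mul_div_assoc]
      have e := hL2 ρ hρ' (invB2 f (Fint f) (φ ρ) - invB2 (modelg B) (modelG B) (modelpsi B ρ))
      have h0 : 0 ≤ |invB2 f (Fint f) (φ ρ) - invB2 (modelg B) (modelG B) (modelpsi B ρ)| /
        (Real.log (Hfun B ρ)) ^ 2 := by positivity
      refine (mul_le_mul_of_nonneg_right a1 h0).trans ?_
      rw [one_mul]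
      refine e.trans (le_of_eq ?_)
      unfold eps2; ring
    simp only [Pi.mul_apply, Pi.sub_apply]
    revert hE hDρ hdecρ
    generalize deriv f (φ ρ) * Fint f (φ ρ) - 1 = w
    generalize deriv f (φ ρ) * Fint f (φ ρ) -
        deriv (modelg B) (modelpsi B ρ) * modelG B (modelpsi B ρ) = D
    generalize (1 - 1 / ρ) * invB2 f (Fint f) (φ ρ) / (Real.log (Hfun B ρ)) ^ 2 -
        (1 - 1 / ρ) * invB2 (modelg B) (modelG B) (modelpsi B ρ) / (Real.log (Hfun B ρ)) ^ 2 = E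
    rw [mul_assoc 20 (f (φ ρ))]
    revert hfF he1 he2 a0 a1
    generalize f (φ ρ) * Fint f (φ ρ) = P
    generalize (1 - 1 / ρ) = a
    generalize eps1 f φ B ρ = e1
    generalize eps2 f φ B ρ = e2
    intro a0 a1 hP he1 he2 hD hw hE
    have hρ0 : 0 < ρ := by linarith
    have a2 : a ^ 2 ≤ 1 := pow_le_one₀ a0 a1
    have a3 : a ^ 3 ≤ 1 := pow_le_one₀ a0 a1
    have t1 : |a ^ 3 * (w * D)| ≤ 16 * (e1 / ρ ^ 2) := by
      rw [abs_mul, abs_mul, abs_of_nonneg (pow_nonneg a0 3)]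
      calc _ ≤ 1 * (8 / ρ * (2 * e1 / ρ)) := by gcongr
        _ = _ := by field_simp; ring
    have t2 : |2 * a * (1 / ρ ^ 2) * D| ≤ 4 * (e1 / ρ ^ 2) := by
      rw [abs_mul, abs_of_nonneg (by positivity : 0 ≤ 2 * a * (1 / ρ ^ 2))]
      have : 2 * e1 / ρ ≤ 2 * e1 := div_le_self (by linarith) (by linarith)
      calc _ ≤ 2 * 1 * (1 / ρ ^ 2) * (2 * e1) := by
            gcongr; exact hD.trans this
        _ = _ := by ring
    have t3 : |a ^ 2 * E| ≤ 4 * (e2 / ρ ^ 2) := by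
      rw [abs_mul, abs_of_nonneg (sq_nonneg a)]
      calc _ ≤ 1 * (4 * e2 / ρ ^ 2) := by gcongr
        _ = _ := by ring
    have key : (P * (a * w) * a ^ 2 + P * (2 * a * (1 / ρ ^ 2))) * D + P * a ^ 2 * E
        = P * (a ^ 3 * (w * D) + 2 * a * (1 / ρ ^ 2) * D + a ^ 2 * E) := by ring
    rw [key, abs_mul, abs_of_pos hP]
    have h2 : 0 ≤ e2 / ρ ^ 2 := by positivity
    have tot : |a ^ 3 * (w * D) + 2 * a * (1 / ρ ^ 2) * D + a ^ 2 * E| ≤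
        20 * ((e1 + e2) / ρ ^ 2) := by
      refine (abs_add_three _ _ _).trans ?_
      rw [add_div]; linarith
    calc _ ≤ P * (20 * ((e1 + e2) / ρ ^ 2)) := mul_le_mul_of_nonneg_left tot hP.le
      _ = _ := by ring
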